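/- In the full power-set diagram G^M_0, every node v in V^M_0 \ (C ∪ I_m) is redundant, where C_m is the set of maximal clusters of C and I_m = {c ∩ c' : c, c' in C_m} is the set of pairwise intersections of maximal clusters. -/

import Mathlib

open Finset

/-- Restriction of a sub-assignment on `c` to a subset `s` (arbitrary values
outside `c`, only meaningful when `s ⊆ c`). -/
noncomputable def restr {V : Type*} [DecidableEq V] {X : V → Type*}
    [∀ i, Nonempty (X i)] (c s : Finset V) (x : (i : c) → X i.1) :
    (i : s) → X i.1 :=
  fun i => if h : i.1 ∈ c then x ⟨i.1, h⟩ else Classical.arbitrary _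

/-- The marginalisation constraint `∑_{x_{c\s}} μ_c(x_c) = μ_s(x_s)`. -/
noncomputable def marg {V : Type*} [DecidableEq V] {X : V → Type*}
    [∀ i, Fintype (X i)] [∀ i, Nonempty (X i)] [∀ i, DecidableEq (X i)]
    (c s : Finset V) (μc : ((i : c) → X i.1) → ℝ)
    (μs : ((i : s) → X i.1) → ℝ) : Prop :=
  ∀ y : (i : s) → X i.1,
    ∑ x ∈ Finset.univ.filter (fun x => restr c s x = y), μc x = μs y

theorem marg_self_aux {V : Type*} [DecidableEq V] {X : V → Type*}
    [∀ i, Fintype (X i)] [∀ i, Nonempty (X i)] [∀ i, DecidableEq (X i)]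
    (c : Finset V) (f : ((i : c) → X i.1) → ℝ) : marg c c f f := by
  intro y
  have h : ∀ x : (i : c) → X i.1, restr c c x = x := by
    intro x
    funext i
    simp [restr]
  simp only [h]
  simp [Finset.filter_eq']

theorem marg_comp_aux {V : Type*} [DecidableEq V] {X : V → Type*}
    [∀ i, Fintype (X i)] [∀ i, Nonempty (X i)] [∀ i, DecidableEq (X i)]
    (c s t : Finset V) (hts : t ⊆ s)
    (f : ((i : c) → X i.1) → ℝ) (g : ((i : s) → X i.1) → ℝ)
    (h : ((i : t) → X i.1) → ℝ) (hcs : marg c s f g) :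
    marg c t f h ↔ marg s t g h := by
  have hr : ∀ x : (i : c) → X i.1, restr s t (restr c s x) = restr c t x := by
    intro x
    funext i
    simp [restr, hts i.2]
  unfold marg
  refine forall_congr' fun y => ?_
  have key : ∑ x ∈ Finset.univ.filter (fun x => restr c t x = y), f x
      = ∑ z ∈ Finset.univ.filter (fun z => restr s t z = y), g z := by
    rw [← Finset.sum_fiberwise_of_maps_to (g := restr c s)
      (t := Finset.univ.filter (fun z => restr s t z = y))]
    · refine Finset.sum_congr rfl fun z hz => ?_
      rw [← hcs z, Finset.filter_filter]
      refine Finset.sum_congr ?_ fun _ _ => rfl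
      ext x
      simp only [Finset.mem_filter, Finset.mem_univ, true_and] at hz ⊢
      constructor
      · exact fun h => h.2
      · rintro rfl
        exact ⟨(hr x).symm.trans hz, rfl⟩
    · intro x hx
      simp only [Finset.mem_filter, Finset.mem_univ, true_and] at hx ⊢
      rw [hr, hx]
  rw [key]

theorem exists_max_aux {V : Type*} [DecidableEq V] (C : Finset (Finset V)) (p : Finset V)
    (h : ∃ c ∈ C, p ⊆ c) : ∃ c ∈ C, p ⊆ c ∧ ∀ d ∈ C, ¬ c ⊂ d := by
  obtain ⟨c, hc, hpc⟩ := h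
  obtain ⟨m, hcm, hm⟩ := C.exists_le_maximal hc
  exact ⟨m, hm.1, hpc.trans hcm, fun d hd hlt => hlt.2 (hm.2 hd hlt.1)⟩

/-- In the full power-set diagram `G^M_0`, every node outside `C ∪ I_m` (where
`I_m` is the set of pairwise intersections of maximal clusters of `C`) is
redundant: all its incoming edges are pairwise equivalent. -/
theorem maximal_cluster_intersection_redundant_nodes {V : Type*} [DecidableEq V]
    {X : V → Type*} [∀ i, Fintype (X i)] [∀ i, Nonempty (X i)]
    [∀ i, DecidableEq (X i)] (C : Finset (Finset V)) :
    ∀ v ∈ {v : Finset V | ∃ c ∈ C, v ⊆ c},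
      v ∉ (↑C : Set (Finset V)) ∪
        {s : Finset V | ∃ c ∈ C, ∃ c' ∈ C,
          (∀ d ∈ C, ¬ c ⊂ d) ∧ (∀ d ∈ C, ¬ c' ⊂ d) ∧ s = c ∩ c'} →
      ∀ p1 p2 : Finset V,
        (p1, v) ∈ {e : Finset V × Finset V |
            e.1 ∈ {v : Finset V | ∃ c ∈ C, v ⊆ c}
            ∧ e.2 ∈ {v : Finset V | ∃ c ∈ C, v ⊆ c} ∧ e.2 ⊂ e.1} →
        (p2, v) ∈ {e : Finset V × Finset V |
            e.1 ∈ {v : Finset V | ∃ c ∈ C, v ⊆ c}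
            ∧ e.2 ∈ {v : Finset V | ∃ c ∈ C, v ⊆ c} ∧ e.2 ⊂ e.1} →
        {μ : ∀ a : Finset V, ((i : a) → X i.1) → ℝ |
            (∀ e ∈ {e : Finset V × Finset V |
                e.1 ∈ {v : Finset V | ∃ c ∈ C, v ⊆ c}
                ∧ e.2 ∈ {v : Finset V | ∃ c ∈ C, v ⊆ c} ∧ e.2 ⊂ e.1},
              e.2 ≠ v → marg e.1 e.2 (μ e.1) (μ e.2))
            ∧ marg p1 v (μ p1) (μ v)}
        = {μ : ∀ a : Finset V, ((i : a) → X i.1) → ℝ |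
            (∀ e ∈ {e : Finset V × Finset V |
                e.1 ∈ {v : Finset V | ∃ c ∈ C, v ⊆ c}
                ∧ e.2 ∈ {v : Finset V | ∃ c ∈ C, v ⊆ c} ∧ e.2 ⊂ e.1},
              e.2 ≠ v → marg e.1 e.2 (μ e.1) (μ e.2))
            ∧ marg p2 v (μ p2) (μ v)} := by
  intro v hv hvn p1 p2 h1 h2
  simp only [Set.mem_setOf_eq] at h1 h2 hv
  obtain ⟨c1, hc1, hp1, hm1⟩ := exists_max_aux C p1 h1.1
  obtain ⟨c2, hc2, hp2, hm2⟩ := exists_max_aux C p2 h2.1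
  have hvd : v ⊂ c1 ∩ c2 := by
    refine Finset.ssubset_iff_subset_ne.2
      ⟨Finset.subset_inter (h1.2.2.1.trans hp1) (h2.2.2.1.trans hp2), fun he => hvn (Or.inr ?_)⟩
    exact ⟨c1, hc1, c2, hc2, hm1, hm2, he⟩
  ext μ
  simp only [Set.mem_setOf_eq]
  refine and_congr_right fun H => ?_
  have A : ∀ c ∈ C, ∀ p, p ⊆ c → v ⊂ p →
      (marg c v (μ c) (μ v) ↔ marg p v (μ p) (μ v)) := by
    intro c hc p hpc hvp
    refine marg_comp_aux c p v hvp.1 _ _ _ ?_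
    by_cases he : p = c
    · subst he
      exact marg_self_aux p _
    · exact H (c, p) ⟨⟨c, hc, Finset.Subset.refl c⟩, ⟨c, hc, hpc⟩,
        Finset.ssubset_iff_subset_ne.2 ⟨hpc, he⟩⟩ hvp.ne'
  rw [← A c1 hc1 p1 hp1 h1.2.2, A c1 hc1 _ Finset.inter_subset_left hvd,
    ← A c2 hc2 p2 hp2 h2.2.2, A c2 hc2 _ Finset.inter_subset_right hvd]
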